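/- Let B be the open unit ball of ℝ⁴. Let Λ > 0, let (ρ_k) be a sequence of reals with 0 < ρ_k ≤ Λ, and let (u_k) be a sequence of solutions of the Dirichlet mean field problem on B with parameters ρ_k. Then the quantities α_k := log( (∫_B exp(u_k(x)) dx) / ρ_k ) are bounded from below: there exists a constant c > 0 such that ∫_B exp(u_k(x)) dx ≥ c·ρ_k for all k. -/

import Mathlib

open MeasureTheory Metric Filter

noncomputable section

/-- The Laplacian of `f : ℝ⁴ → ℝ` at `x`: the trace of the second derivative. -/
def lap (f : EuclideanSpace ℝ (Fin 4) → ℝ) (x : EuclideanSpace ℝ (Fin 4)) : ℝ :=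
  ∑ i : Fin 4,
    fderiv ℝ (fun y => fderiv ℝ f y (EuclideanSpace.single i (1:ℝ))) x
      (EuclideanSpace.single i (1:ℝ))

/-- `u` is a solution of the Dirichlet mean field problem on the open unit ball of `ℝ⁴`
with parameter `ρ`. -/
def IsMFSolution (ρ : ℝ) (u : EuclideanSpace ℝ (Fin 4) → ℝ) : Prop :=
  ContDiffOn ℝ 4 u (closedBall (0 : EuclideanSpace ℝ (Fin 4)) 1) ∧
  (∀ x ∈ ball (0 : EuclideanSpace ℝ (Fin 4)) 1,
    lap (lap u) x
      = ρ * Real.exp (u x) /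
          ∫ y in ball (0 : EuclideanSpace ℝ (Fin 4)) 1, Real.exp (u y)) ∧
  (∀ x : EuclideanSpace ℝ (Fin 4), ‖x‖ = 1 →
    u x = 0 ∧ fderivWithin ℝ u (closedBall (0 : EuclideanSpace ℝ (Fin 4)) 1) x = 0)

abbrev E4 := EuclideanSpace ℝ (Fin 4)
abbrev CB : Set E4 := closedBall (0 : E4) 1

/-- directional derivative within the closed ball -/
def DD (v : E4) (f : E4 → ℝ) : E4 → ℝ := fun x => fderivWithin ℝ f CB x v

lemma uniqueCB : UniqueDiffOn ℝ CB :=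
  uniqueDiffOn_convex (convex_closedBall _ _) (by
    rw [interior_closedBall _ one_ne_zero]; exact ⟨0, by simp⟩)

lemma DD_contDiffOn {v : E4} {f : E4 → ℝ} {n : ℕ} (hf : ContDiffOn ℝ ((n + 1 : ℕ)) f CB) :
    ContDiffOn ℝ n (DD v f) CB := by
  have := hf.fderivWithin uniqueCB (m := n) (by push_cast; exact le_rfl)
  exact this.clm_apply contDiffOn_const

lemma integrableOn_of_cont {f : E4 → ℝ} (hf : ContinuousOn f CB) :
    IntegrableOn f (ball (0 : E4) 1) :=
  (hf.integrableOn_compact (isCompact_closedBall _ _)).mono_set ball_subset_closedBall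

lemma ext_lipschitz {h : E4 → ℝ} (hh : ContDiffOn ℝ 1 h CB) (h0 : ∀ x : E4, ‖x‖ = 1 → h x = 0) :
    ∃ K, LipschitzWith K (CB.indicator h) := by
  have hc : ContinuousOn (fderivWithin ℝ h CB) CB :=
    hh.continuousOn_fderivWithin uniqueCB le_rfl
  obtain ⟨C, hC⟩ := (isCompact_closedBall (0:E4) 1).exists_bound_of_continuousOn hc
  have hlip : LipschitzOnWith C.toNNReal h CB := by
    refine (convex_closedBall (0:E4) 1).lipschitzOnWith_of_nnnorm_fderivWithin_le
      (hh.differentiableOn one_ne_zero) ?_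
    intro x hx
    rw [← NNReal.coe_le_coe]
    exact (hC x hx).trans (Real.le_coe_toNNReal C)
  refine ⟨C.toNNReal, ?_⟩
  have key : ∀ x y : E4, x ∈ CB → y ∉ CB →
      dist (CB.indicator h x) (CB.indicator h y) ≤ C.toNNReal * dist x y := by
    intro x y hx hy
    have hx' : ‖x‖ ≤ 1 := by simpa using hx
    have hy' : 1 ≤ ‖y‖ := by
      have : 1 < ‖y‖ := by simpa using hy
      exact this.le
    have hcont : ContinuousOn (fun t : ℝ => ‖AffineMap.lineMap x y t‖) (Set.Icc 0 1) := by
      have : Continuous (fun t : ℝ => (AffineMap.lineMap x y t : E4)) :=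
        AffineMap.lineMap_continuous
      exact this.norm.continuousOn
    obtain ⟨t, ht, htz⟩ := intermediate_value_Icc zero_le_one hcont
      (show (1:ℝ) ∈ Set.Icc _ _ by simpa using ⟨hx', hy'⟩)
    set z : E4 := AffineMap.lineMap x y t with hz
    have hzm : z ∈ CB := by
      have : ‖z‖ = 1 := htz
      simp [this]
    have hd : dist x z ≤ dist x y := by
      rw [hz, dist_left_lineMap, Real.norm_of_nonneg ht.1]
      nlinarith [ht.2, dist_nonneg (x := x) (y := y)]
    rw [Set.indicator_of_mem hx, Set.indicator_of_notMem hy, ← h0 z htz]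
    exact (hlip.dist_le_mul x hx z hzm).trans (by gcongr)
  refine LipschitzWith.of_dist_le_mul fun x y => ?_
  by_cases hx : x ∈ CB <;> by_cases hy : y ∈ CB
  · rw [Set.indicator_of_mem hx, Set.indicator_of_mem hy]
    exact hlip.dist_le_mul x hx y hy
  · exact key x y hx hy
  · rw [dist_comm, dist_comm x y]; exact key y x hy hx
  · rw [Set.indicator_of_notMem hx, Set.indicator_of_notMem hy]; simp; positivity

lemma integral_DD_zero {h : E4 → ℝ} (hh : ContDiffOn ℝ 1 h CB)
    (h0 : ∀ x : E4, ‖x‖ = 1 → h x = 0) (v : E4) :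
    ∫ x in ball (0 : E4) 1, DD v h x = 0 := by
  obtain ⟨K, hK⟩ := ext_lipschitz hh h0
  have hcs : HasCompactSupport (CB.indicator h) :=
    HasCompactSupport.intro (isCompact_closedBall (0:E4) 1) fun x hx => Set.indicator_of_notMem hx _
  have h1 : LipschitzWith 0 (fun _ : E4 => (1:ℝ)) := LipschitzWith.const 1
  have := LipschitzWith.integral_lineDeriv_mul_eq (μ := volume) h1 hK hcs (-v)
  have hl : ∀ x : E4, lineDeriv ℝ (fun _ : E4 => (1:ℝ)) x (-v) = 0 := fun x => by
    simp [lineDeriv]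
  simp only [hl, neg_neg, mul_one, zero_mul, integral_zero] at this
  rw [this, ← integral_indicator measurableSet_ball]
  refine integral_congr_ae ?_
  have hs : ∀ᵐ x : E4 ∂volume, x ∉ sphere (0:E4) 1 := 
    measure_eq_zero_iff_ae_notMem.1 (Measure.addHaar_sphere_of_ne_zero _ _ one_ne_zero)
  filter_upwards [hs] with x hx
  by_cases hxb : x ∈ ball (0:E4) 1
  · rw [Set.indicator_of_mem hxb]
    have hn : CB ∈ nhds x := mem_of_superset (isOpen_ball.mem_nhds hxb) ball_subset_closedBall
    have hd : HasFDerivAt h (fderivWithin ℝ h CB x) x :=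
      ((hh.differentiableOn one_ne_zero x (ball_subset_closedBall hxb)).hasFDerivWithinAt).hasFDerivAt hn
    have he : CB.indicator h =ᶠ[nhds x] h := by
      filter_upwards [hn] with y hy using Set.indicator_of_mem hy _
    exact ((hd.congr_of_eventuallyEq he).hasLineDerivAt v).lineDeriv.symm
  · rw [Set.indicator_of_notMem hxb]
    have hxc : x ∈ CBᶜ := by
      simp only [mem_ball, mem_sphere, not_lt, Set.mem_compl_iff, mem_closedBall, not_le] at *
      exact lt_of_le_of_ne hxb (Ne.symm hx)
    have he : CB.indicator h =ᶠ[nhds x] fun _ => 0 := by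
      filter_upwards [isClosed_closedBall.isOpen_compl.mem_nhds hxc] with y hy using
        Set.indicator_of_notMem hy _
    exact (((hasFDerivAt_const (0:ℝ) x).congr_of_eventuallyEq he).hasLineDerivAt v).lineDeriv.symm

lemma DD_mul {f g : E4 → ℝ} (hf : ContDiffOn ℝ 1 f CB) (hg : ContDiffOn ℝ 1 g CB) (v : E4)
    {x : E4} (hx : x ∈ CB) :
    DD v (fun y => f y * g y) x = f x * DD v g x + DD v f x * g x := by
  unfold DD
  rw [fderivWithin_fun_mul (uniqueCB x hx) (hf.differentiableOn one_ne_zero x hx)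
    (hg.differentiableOn one_ne_zero x hx)]
  simp; ring

lemma ibp {f g : E4 → ℝ} (hf : ContDiffOn ℝ 1 f CB) (hg : ContDiffOn ℝ 1 g CB)
    (h0 : ∀ x : E4, ‖x‖ = 1 → f x * g x = 0) (v : E4) :
    ∫ x in ball (0 : E4) 1, f x * DD v g x = - ∫ x in ball (0 : E4) 1, DD v f x * g x := by
  have h := integral_DD_zero (hf.mul hg) h0 v
  rw [setIntegral_congr_fun measurableSet_ball
    (fun x hx => DD_mul hf hg v (ball_subset_closedBall hx)), integral_add] at h
  · linarith
  · exact integrableOn_of_cont (hf.continuousOn.mul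
      (DD_contDiffOn (n := 0) (by simpa using hg)).continuousOn)
  · exact integrableOn_of_cont
      ((DD_contDiffOn (n := 0) (by simpa using hf)).continuousOn.mul hg.continuousOn)

/-- move two derivatives -/
lemma ibp2 {f g : E4 → ℝ} (hf : ContDiffOn ℝ 2 f CB) (hg : ContDiffOn ℝ 2 g CB) (v : E4)
    (h0 : ∀ x : E4, ‖x‖ = 1 → f x = 0) (h1 : ∀ x : E4, ‖x‖ = 1 → DD v f x = 0) :
    ∫ x in ball (0 : E4) 1, f x * DD v (DD v g) x
      = ∫ x in ball (0 : E4) 1, DD v (DD v f) x * g x := by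
  have hf' : ContDiffOn ℝ 1 (DD v f) CB := DD_contDiffOn (n := 1) hf
  have hg' : ContDiffOn ℝ 1 (DD v g) CB := DD_contDiffOn (n := 1) hg
  rw [ibp (hf.of_le (by norm_num)) hg' (fun x hx => by simp [h0 x hx]),
    ibp hf' (hg.of_le (by norm_num)) (fun x hx => by simp [h1 x hx]), neg_neg]

abbrev ee (i : Fin 4) : E4 := EuclideanSpace.single i (1:ℝ)

/-- Laplacian within the closed ball -/
def LL (f : E4 → ℝ) : E4 → ℝ := fun x => ∑ i : Fin 4, DD (ee i) (DD (ee i) f) x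

lemma LL_contDiffOn {f : E4 → ℝ} {n : ℕ} (hf : ContDiffOn ℝ ((n + 1 + 1 : ℕ)) f CB) :
    ContDiffOn ℝ n (LL f) CB :=
  ContDiffOn.sum fun _ _ => DD_contDiffOn (DD_contDiffOn hf)

lemma green {f g : E4 → ℝ} (hf : ContDiffOn ℝ 2 f CB) (hg : ContDiffOn ℝ 2 g CB)
    (h0 : ∀ x : E4, ‖x‖ = 1 → f x = 0) (h1 : ∀ v, ∀ x : E4, ‖x‖ = 1 → DD v f x = 0) :
    ∫ x in ball (0 : E4) 1, f x * LL g x = ∫ x in ball (0 : E4) 1, LL f x * g x := by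
  have c2 : ∀ {f : E4 → ℝ}, ContDiffOn ℝ 2 f CB → ∀ v, ContinuousOn (DD v (DD v f)) CB :=
    fun hf v => (DD_contDiffOn (n := 0) (DD_contDiffOn (n := 1) hf)).continuousOn
  simp only [LL, Finset.mul_sum, Finset.sum_mul]
  rw [integral_finsetSum, integral_finsetSum]
  · exact Finset.sum_congr rfl fun i _ => ibp2 hf hg _ h0 (h1 _)
  · exact fun i _ => integrableOn_of_cont ((c2 hf _).mul hg.continuousOn)
  · exact fun i _ => integrableOn_of_cont (hf.continuousOn.mul (c2 hg _))

lemma DD_eq_fderiv (v : E4) (f : E4 → ℝ) {x : E4} (hx : x ∈ ball (0:E4) 1) :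
    DD v f x = fderiv ℝ f x v := by
  unfold DD
  rw [fderivWithin_of_mem_nhds
    (mem_of_superset (isOpen_ball.mem_nhds hx) ball_subset_closedBall)]

lemma lap_eq_LL {f g : E4 → ℝ} (hfg : ∀ x ∈ ball (0:E4) 1, f x = g x) {x : E4}
    (hx : x ∈ ball (0:E4) 1) : lap f x = LL g x := by
  have hev : ∀ y ∈ ball (0:E4) 1, f =ᶠ[nhds y] g := fun y hy => by
    filter_upwards [isOpen_ball.mem_nhds hy] with z hz using hfg z hz
  unfold lap LL
  refine Finset.sum_congr rfl fun i _ => ?_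
  rw [DD_eq_fderiv _ _ hx]
  have : (fun y => fderiv ℝ f y (EuclideanSpace.single i (1:ℝ))) =ᶠ[nhds x] DD (ee i) g := by
    filter_upwards [isOpen_ball.mem_nhds hx] with z hz
    rw [DD_eq_fderiv _ _ hz, (hev z hz).fderiv_eq]
  rw [this.fderiv_eq]

lemma DD_of_hasFDerivAt {f F : E4 → ℝ} (hfF : ∀ y ∈ CB, f y = F y) {x : E4} (hx : x ∈ CB)
    {F' : E4 →L[ℝ] ℝ} (hF : HasFDerivAt F F' x) (v : E4) : DD v f x = F' v := by
  unfold DD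
  rw [fderivWithin_congr hfF (hfF x hx), hF.hasFDerivWithinAt.fderivWithin (uniqueCB x hx)]

/-- the test function -/
def ww : E4 → ℝ := fun x => (1 - ‖x‖ ^ 2) ^ 2

lemma ww_contDiff {n : WithTop ℕ∞} : ContDiff ℝ n ww :=
  (contDiff_const.sub (contDiff_norm_sq ℝ)).pow 2

lemma hasF_nsq (x : E4) : HasFDerivAt (fun y : E4 => ‖y‖ ^ 2) (2 • innerSL ℝ x) x :=
  (hasStrictFDerivAt_norm_sq x).hasFDerivAt

lemma DD_ww (v : E4) {x : E4} (hx : x ∈ CB) :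
    DD v ww x = -4 * (1 - ‖x‖ ^ 2) * inner ℝ v x := by
  rw [DD_of_hasFDerivAt (f := ww) (F := ww) (fun _ _ => rfl) hx (((hasF_nsq x).const_sub 1).pow 2)]
  simp [real_inner_comm]; ring

lemma DDDD_ww (v : E4) {x : E4} (hx : x ∈ CB) :
    DD v (DD v ww) x = 8 * inner ℝ v x ^ 2 - 4 * (1 - ‖x‖ ^ 2) * ‖v‖ ^ 2 := by
  rw [DD_of_hasFDerivAt (fun y hy => DD_ww v hy) hx
    ((((hasF_nsq x).const_sub 1).const_mul (-4)).mul (innerSL ℝ v).hasFDerivAt)]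
  simp [real_inner_comm]; ring

lemma LL_ww {x : E4} (hx : x ∈ CB) : LL ww x = 24 * ‖x‖ ^ 2 - 16 := by
  unfold LL
  simp only [DDDD_ww _ hx]
  have : ‖x‖ ^ 2 = ∑ i, x i ^ 2 := EuclideanSpace.real_norm_sq_eq x
  simp [ee, Fin.sum_univ_four, EuclideanSpace.inner_single_left] at this ⊢
  rw [this]; ring

lemma DD_LL_ww (v : E4) {x : E4} (hx : x ∈ CB) : DD v (LL ww) x = 48 * inner ℝ v x := by
  rw [DD_of_hasFDerivAt (fun y hy => LL_ww hy) hx (((hasF_nsq x).const_mul 24).sub_const 16)]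
  simp [real_inner_comm]; ring

lemma LL_LL_ww {x : E4} (hx : x ∈ CB) : LL (LL ww) x = 192 := by
  have : ∀ v : E4, DD v (DD v (LL ww)) x = 48 * ‖v‖ ^ 2 := fun v => by
    rw [DD_of_hasFDerivAt (fun y hy => DD_LL_ww v hy) hx
      ((innerSL ℝ v).hasFDerivAt.const_mul 48)]
    simp
  unfold LL at this ⊢
  simp only [this]
  simp [ee]; norm_num

lemma integral_u_nonneg {ρ : ℝ} (hρ : 0 < ρ) {u : E4 → ℝ} (h : IsMFSolution ρ u) :
    0 ≤ ∫ x in ball (0 : E4) 1, u x := by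
  obtain ⟨hu, heq, hbd⟩ := h
  have hu2 : ContDiffOn ℝ 2 u CB := hu.of_le (by norm_num)
  have hLu : ContDiffOn ℝ 2 (LL u) CB := LL_contDiffOn (n := 2) hu
  have hLw : ContDiffOn ℝ 2 (LL ww) CB := LL_contDiffOn (n := 2) ww_contDiff.contDiffOn
  have e1 := green (f := ww) ww_contDiff.contDiffOn hLu (fun x hx => by simp [ww, hx])
    (fun v x hx => by rw [DD_ww v (by simp [hx])]; simp [hx])
  have e2 := green hu2 hLw (fun x hx => (hbd x hx).1)
    (fun v x hx => by unfold DD; rw [(hbd x hx).2]; simp)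
  have e3 : ∫ x in ball (0 : E4) 1, u x * LL (LL ww) x
      = 192 * ∫ x in ball (0 : E4) 1, u x := by
    rw [← integral_const_mul]
    refine setIntegral_congr_fun measurableSet_ball fun x hx => ?_
    simp only [LL_LL_ww (ball_subset_closedBall hx)]; ring
  have e4 : 0 ≤ ∫ x in ball (0 : E4) 1, ww x * LL (LL u) x := by
    refine setIntegral_nonneg measurableSet_ball fun x hx => ?_
    have hl : lap (lap u) x = LL (LL u) x :=
      lap_eq_LL (fun y hy => lap_eq_LL (fun _ _ => rfl) hy) hx
    rw [← hl, heq x hx]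
    have : 0 ≤ ∫ y in ball (0 : E4) 1, Real.exp (u y) :=
      integral_nonneg fun y => (Real.exp_pos _).le
    unfold ww
    positivity
  have e5 : ∫ x in ball (0 : E4) 1, LL ww x * LL u x
      = ∫ x in ball (0 : E4) 1, LL u x * LL ww x := by
    simp only [mul_comm]
  linarith

lemma integral_exp_ge {ρ : ℝ} (hρ : 0 < ρ) {u : E4 → ℝ} (h : IsMFSolution ρ u) :
    volume.real (ball (0 : E4) 1) ≤ ∫ x in ball (0 : E4) 1, Real.exp (u x) := by
  have h0 := integral_u_nonneg hρ h
  have hc : ContinuousOn u CB := h.1.continuousOn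
  have h1 : ∫ x in ball (0 : E4) 1, (u x + 1) ≤ ∫ x in ball (0 : E4) 1, Real.exp (u x) :=
    setIntegral_mono_on (integrableOn_of_cont (hc.add continuousOn_const))
      (integrableOn_of_cont (Real.continuous_exp.comp_continuousOn hc)) measurableSet_ball
      fun x _ => Real.add_one_le_exp _
  rw [integral_add (integrableOn_of_cont hc) (integrableOn_of_cont continuousOn_const)] at h1
  simp at h1
  linarith

/-- Lower bound on `α_k = log((∫_B e^{u_k})/ρ_k)`: there is `c > 0` with
`∫_B e^{u_k} ≥ c ρ_k` for all `k`. -/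
theorem mean_field_alpha_lower_bound (Λ : ℝ) (hΛ : 0 < Λ)
    (ρ : ℕ → ℝ) (u : ℕ → EuclideanSpace ℝ (Fin 4) → ℝ)
    (hρ : ∀ k, 0 < ρ k ∧ ρ k ≤ Λ)
    (hsol : ∀ k, IsMFSolution (ρ k) (u k)) :
    ∃ c > (0:ℝ), ∀ k,
      c * ρ k ≤ ∫ x in ball (0 : EuclideanSpace ℝ (Fin 4)) 1, Real.exp (u k x) := by
  have hv : 0 < volume.real (ball (0 : E4) 1) :=
    ENNReal.toReal_pos (measure_ball_pos _ _ one_pos).ne' measure_ball_lt_top.ne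
  refine ⟨volume.real (ball (0 : E4) 1) / Λ, div_pos hv hΛ, fun k => ?_⟩
  refine le_trans ?_ (integral_exp_ge (hρ k).1 (hsol k))
  rw [div_mul_eq_mul_div, div_le_iff₀ hΛ]
  exact mul_le_mul_of_nonneg_left (hρ k).2 hv.le

end
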